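/- arXiv:1903.05011 — 7 statements merged into one kernel-verified Lean document; each statement's English description precedes it below -/
import Mathlib

section
/- Let R be a reduced, finite-type commutative ℂ-algebra, let ℓ ≥ 1, and let 𝒜 be a set of homogeneous polynomials of positive degree in the polynomial ring R[x₁,…,x_ℓ]. Assume that for every ℂ-algebra homomorphism φ : R[x₁,…,x_ℓ] → ℂ satisfying φ(f) = 0 for all f ∈ 𝒜, one has φ(xᵢ) = 0 for all i = 1,…,ℓ. Then R[x₁,…,x_ℓ] is a finitely generated module over the R-subalgebra R[𝒜] generated by 𝒜; in particular, R[𝒜] is a finitely generated R-algebra. -/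
open MvPolynomial

/-!
By the Nullstellensatz every variable lies in the radical of the ideal `(𝒜)`, so `R[x]/(𝒜)` is
generated over `R` by finitely many nilpotent elements and is a finite `R`-module. A graded form
of Nakayama's lemma lifts homogeneous generators of this quotient to generators of `R[x]` over
`R[𝒜]`: since the elements of `𝒜` have positive degree, each homogeneous component of an element
of `(𝒜)` is an `R[𝒜]`-combination of elements of lower degree, and one inducts on the degree. The
Artin–Tate lemma then shows that `R[𝒜]` is of finite type over the Noetherian ring `R`.
-/

theorem mem_radical_iff_forall_algHom_eq_zero {k K S : Type*} [Field k] [Field K] [IsAlgClosed K]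
    [Algebra k K] [CommRing S] [Algebra k S] [Algebra.FiniteType k S] {I : Ideal S} {x : S} :
    x ∈ I.radical ↔ ∀ φ : S →ₐ[k] K, I ≤ RingHom.ker φ → φ x = 0 := by
  refine ⟨fun ⟨n, hn⟩ φ hφ ↦ eq_zero_of_pow_eq_zero (n := n) ?_, fun h ↦ ?_⟩
  · rw [← map_pow]
    exact hφ hn
  have : IsJacobsonRing S := isJacobsonRing_of_finiteType (A := k)
  rw [Ideal.radical_eq_jacobson, Ideal.jacobson, Ideal.mem_sInf]
  rintro m ⟨hIm, hm⟩
  let : Field (S ⧸ m) := Ideal.Quotient.field m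
  have : Module.Finite k (S ⧸ m) := finite_of_finite_type_of_isJacobsonRing k (S ⧸ m)
  let ψ : S ⧸ m →ₐ[k] K := IsAlgClosed.lift
  have hψ : ψ (Ideal.Quotient.mk m x) = 0 :=
    h (ψ.comp (Ideal.Quotient.mkₐ k m)) fun y hy ↦ by
      simp [RingHom.mem_ker, Ideal.Quotient.eq_zero_iff_mem.2 (hIm hy)]
  rwa [map_eq_zero, Ideal.Quotient.eq_zero_iff_mem] at hψ

theorem finite_quotient_of_X_mem_radical {R σ : Type*} [CommRing R] [Finite σ]
    {I : Ideal (MvPolynomial σ R)} (hI : ∀ i, X i ∈ I.radical) :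
    Module.Finite R (MvPolynomial σ R ⧸ I) := by
  have hint : ∀ y ∈ Ideal.Quotient.mkₐ R I '' Set.range X, IsIntegral R y := by
    rintro _ ⟨_, ⟨i, rfl⟩, rfl⟩
    obtain ⟨n, hn⟩ := hI i
    have hpow : Ideal.Quotient.mkₐ R I (X i) ^ (n + 1) = 0 := by
      rw [← map_pow, pow_succ]
      exact Ideal.Quotient.eq_zero_iff_mem.2 (I.mul_mem_right _ hn)
    exact .of_pow n.succ_pos (hpow ▸ isIntegral_zero)
  have hfg := fg_adjoin_of_finite ((Set.finite_range X).image _) hint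
  rw [← AlgHom.map_adjoin, adjoin_range_X, Algebra.map_top,
    (AlgHom.range_eq_top _).2 (Ideal.Quotient.mkₐ_surjective R I)] at hfg
  exact ⟨by simpa using hfg⟩

section GradedModule

open DirectSum

variable {R M ι : Type*} [Semiring R] [AddCommMonoid M] [Module R M] [DecidableEq ι]
  (ℳ : ι → Submodule R M) [Decomposition ℳ]

theorem decompose_mem_span_of_isHomogeneousElem {T : Set M}
    (hT : ∀ t ∈ T, SetLike.IsHomogeneousElem ℳ t) {x : M} (hx : x ∈ Submodule.span R T) (i : ι) :
    (decompose ℳ x i : M) ∈ Submodule.span R T := by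
  induction hx using Submodule.span_induction with
  | zero => simp
  | add x y _ _ hx hy => simpa using add_mem hx hy
  | smul r x _ hx =>
    rw [decompose_smul, DirectSum.smul_apply, SetLike.val_smul]
    exact Submodule.smul_mem _ r hx
  | mem t ht =>
    obtain ⟨j, hj⟩ := hT t ht
    rw [decompose_of_mem ℳ hj, coe_of_apply]
    split_ifs
    · exact Submodule.subset_span ht
    · exact zero_mem _

theorem exists_finite_homogeneous_le_span {N : Submodule R M} (hN : N.FG) :
    ∃ T : Set M, T.Finite ∧ (∀ t ∈ T, SetLike.IsHomogeneousElem ℳ t) ∧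
      N ≤ Submodule.span R T := by
  classical
  obtain ⟨F, rfl⟩ := hN
  refine ⟨⋃ x ∈ F, (fun i ↦ (decompose ℳ x i : M)) '' (decompose ℳ x).support,
    F.finite_toSet.biUnion fun x _ ↦ (Finset.finite_toSet _).image _, ?_, ?_⟩
  · simp only [Set.mem_iUnion]
    rintro _ ⟨x, -, i, -, rfl⟩
    exact ⟨i, (decompose ℳ x i).2⟩
  · refine Submodule.span_le.2 fun x hx ↦ ?_
    rw [← sum_support_decompose ℳ x]
    exact sum_mem fun i hi ↦ Submodule.subset_span (Set.mem_biUnion hx ⟨i, hi, rfl⟩)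

end GradedModule

section GradedNakayama

open DirectSum

variable {R S : Type*} [CommRing R] [CommRing S] [Algebra R S]
  (𝒢 : ℕ → Submodule R S) [GradedAlgebra 𝒢] {A : Set S}

theorem decompose_mem_of_mem_span (hA : ∀ f ∈ A, ∃ n, 0 < n ∧ f ∈ 𝒢 n)
    {M : Submodule (Algebra.adjoin R A) S} {d : ℕ} (hM : ∀ e < d, ∀ x ∈ 𝒢 e, x ∈ M)
    {x : S} (hx : x ∈ Ideal.span A) : (decompose 𝒢 x d : S) ∈ M := by
  induction hx using Submodule.closure_induction with
  | zero => simp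
  | add x y _ _ hx hy => simpa using M.add_mem hx hy
  | smul_mem a f hf =>
    obtain ⟨n, hn, hfn⟩ := hA f hf
    rw [smul_eq_mul, coe_decompose_mul_of_right_mem 𝒢 d hfn]
    split_ifs with hnd
    · rw [mul_comm]
      exact M.smul_mem ⟨f, Algebra.subset_adjoin hf⟩
        (hM (d - n) (by omega) _ (decompose 𝒢 a (d - n)).2)
    · exact M.zero_mem

theorem span_adjoin_eq_top_of_span_sup_eq_top (hA : ∀ f ∈ A, ∃ n, 0 < n ∧ f ∈ 𝒢 n) {T : Set S}
    (hT : ∀ t ∈ T, SetLike.IsHomogeneousElem 𝒢 t)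
    (hspan : Submodule.span R T ⊔ (Ideal.span A).restrictScalars R = ⊤) :
    Submodule.span (Algebra.adjoin R A) T = ⊤ := by
  classical
  set M := Submodule.span (Algebra.adjoin R A) T
  have hhom : ∀ d, ∀ x ∈ 𝒢 d, x ∈ M := by
    intro d
    induction d using Nat.strong_induction_on with
    | _ d ih =>
      intro x hx
      obtain ⟨y, hy, z, hz, rfl⟩ := Submodule.mem_sup.1 (hspan ▸ Submodule.mem_top (x := x))
      rw [← decompose_of_mem_same 𝒢 hx, decompose_add, DirectSum.add_apply, Submodule.coe_add]
      exact M.add_mem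
        (Submodule.span_le_restrictScalars R _ T
          (decompose_mem_span_of_isHomogeneousElem 𝒢 hT hy d))
        (decompose_mem_of_mem_span 𝒢 hA ih hz)
  refine eq_top_iff.2 fun x _ ↦ ?_
  rw [← sum_support_decompose 𝒢 x]
  exact M.sum_mem fun d _ ↦ hhom d _ (decompose 𝒢 x d).2

theorem finite_adjoin_of_finite_quotient_span (hA : ∀ f ∈ A, ∃ n, 0 < n ∧ f ∈ 𝒢 n)
    [Module.Finite R (S ⧸ Ideal.span A)] : Module.Finite (Algebra.adjoin R A) S := by
  let π : S →ₗ[R] S ⧸ Ideal.span A := (Ideal.Quotient.mkₐ R (Ideal.span A)).toLinearMap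
  have hπ : Function.Surjective π := Ideal.Quotient.mkₐ_surjective R _
  have hker : LinearMap.ker π = (Ideal.span A).restrictScalars R := by
    ext x
    exact Ideal.Quotient.eq_zero_iff_mem
  obtain ⟨n, y, hy⟩ := Module.Finite.exists_fin (R := R) (M := S ⧸ Ideal.span A)
  choose x hx using fun i ↦ hπ (y i)
  obtain ⟨T, hTfin, hT, hxT⟩ := exists_finite_homogeneous_le_span 𝒢
    (Submodule.fg_span (R := R) (Set.finite_range x))
  have hmap : (Submodule.span R T).map π = ⊤ := by
    rw [eq_top_iff, ← hy, ← funext hx, Set.range_comp', ← Submodule.map_span]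
    exact Submodule.map_mono hxT
  rw [LinearMap.map_eq_top_iff (LinearMap.range_eq_top.2 hπ), hker] at hmap
  exact ⟨span_adjoin_eq_top_of_span_sup_eq_top 𝒢 hA hT hmap ▸ Submodule.fg_span hTfin⟩

end GradedNakayama

theorem stmt_0_general {k K R σ : Type*} [Field k] [Field K] [IsAlgClosed K] [Algebra k K]
    [CommRing R] [Algebra k R] [Algebra.FiniteType k R] [Finite σ]
    (𝒜 : Set (MvPolynomial σ R))
    (hhom : ∀ f ∈ 𝒜, ∃ n : ℕ, 0 < n ∧ f.IsHomogeneous n)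
    (hvan : ∀ φ : MvPolynomial σ R →ₐ[k] K, (∀ f ∈ 𝒜, φ f = 0) → ∀ i, φ (X i) = 0) :
    Module.Finite (Algebra.adjoin R 𝒜) (MvPolynomial σ R) ∧
      Algebra.FiniteType R (Algebra.adjoin R 𝒜) := by
  have : Algebra.FiniteType k (MvPolynomial σ R) := .trans (S := R) inferInstance inferInstance
  have hrad (i : σ) : X i ∈ (Ideal.span 𝒜).radical :=
    (mem_radical_iff_forall_algHom_eq_zero (k := k) (K := K)).2 fun φ hφ ↦
      hvan φ (fun f hf ↦ hφ (Ideal.subset_span hf)) i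
  have := finite_quotient_of_X_mem_radical hrad
  let := MvPolynomial.gradedAlgebra (σ := σ) (R := R)
  have hfin : Module.Finite (Algebra.adjoin R 𝒜) (MvPolynomial σ R) :=
    finite_adjoin_of_finite_quotient_span (homogeneousSubmodule σ R) hhom
  have : IsNoetherianRing R := Algebra.FiniteType.isNoetherianRing k R
  exact ⟨hfin, ⟨fg_of_fg_of_fg R (Algebra.adjoin R 𝒜) (MvPolynomial σ R)
    Algebra.FiniteType.out hfin.1 Subtype.val_injective⟩⟩

/-- Let `R` be a reduced, finite-type commutative `ℂ`-algebra, `ℓ ≥ 1`,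
and `𝒜` a set of homogeneous polynomials of positive degree in `R[x₁,…,x_ℓ]`.  If every
`ℂ`-algebra homomorphism `φ : R[x₁,…,x_ℓ] → ℂ` vanishing on `𝒜` kills all the variables,
then `R[x₁,…,x_ℓ]` is a finite module over the `R`-subalgebra `R[𝒜]`, and in particular
`R[𝒜]` is a finitely generated `R`-algebra. -/
theorem stmt_0 (R : Type) [CommRing R] [IsReduced R] [Algebra ℂ R]
    [Algebra.FiniteType ℂ R] (ℓ : ℕ) (hℓ : 1 ≤ ℓ)
    (𝒜 : Set (MvPolynomial (Fin ℓ) R))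
    (hhom : ∀ f ∈ 𝒜, ∃ n : ℕ, 0 < n ∧ f.IsHomogeneous n)
    (hvan : ∀ φ : MvPolynomial (Fin ℓ) R →ₐ[ℂ] ℂ,
      (∀ f ∈ 𝒜, φ f = 0) → ∀ i : Fin ℓ, φ (X i) = 0) :
    Module.Finite (Algebra.adjoin R 𝒜) (MvPolynomial (Fin ℓ) R) ∧
      Algebra.FiniteType R (Algebra.adjoin R 𝒜) :=
  stmt_0_general 𝒜 hhom hvan
end

section
/- In the polynomial ring ℂ[y₁,…,y_k,x₁,…,x_k], define for n ≥ 1 the weighted power sum pₙ := y₁x₁ⁿ + ⋯ + y_k x_kⁿ and the weighted elementary symmetric polynomial eₙ := Σ_{i₁+⋯+i_k=n} C(y₁,i₁)⋯C(y_k,i_k)·x₁^{i₁}⋯x_k^{i_k}, where C(y,i) := y(y−1)⋯(y−i+1)/i! is the generalized binomial coefficient polynomial. Then for every N ≥ 1, the ℂ-subalgebra of ℂ[y₁,…,y_k,x₁,…,x_k] generated by {p₁,…,p_N} equals the ℂ-subalgebra generated by {e₁,…,e_N}. -/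
open MvPolynomial

/-- The generalized binomial coefficient polynomial `C(a, i) = a(a−1)⋯(a−i+1)/i!`,
evaluated at an element `a` of a commutative `ℂ`-algebra (here a polynomial ring);
by convention `C(a, 0) = 1`. -/
noncomputable def gbinom {σ : Type} (a : MvPolynomial σ ℂ) (i : ℕ) : MvPolynomial σ ℂ :=
  ((i.factorial : ℂ)⁻¹) • Polynomial.aeval a (descPochhammer ℂ i)

/-- The weighted power sum `pₙ = y₁x₁ⁿ + ⋯ + y_k x_kⁿ` in `ℂ[y₁,…,y_k,x₁,…,x_k]`,
where `y_j = X (Sum.inl j)` and `x_j = X (Sum.inr j)`. -/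
noncomputable def wPow (k : ℕ) (n : ℕ) : MvPolynomial (Fin k ⊕ Fin k) ℂ :=
  ∑ j : Fin k, X (Sum.inl j) * X (Sum.inr j) ^ n

/-- The weighted elementary symmetric polynomial
`eₙ = Σ_{i₁+⋯+i_k=n} C(y₁,i₁)⋯C(y_k,i_k)·x₁^{i₁}⋯x_k^{i_k}` in `ℂ[y₁,…,y_k,x₁,…,x_k]`. -/
noncomputable def wElem (k : ℕ) (n : ℕ) : MvPolynomial (Fin k ⊕ Fin k) ℂ :=
  ∑ t ∈ Finset.Nat.antidiagonalTuple k n,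
    ∏ j : Fin k, gbinom (X (Sum.inl j)) (t j) * X (Sum.inr j) ^ (t j)

/-!
Consider the generating series `E = ∏ⱼ (1 + xⱼ T) ^ aⱼ = ∑ₙ eₙ Tⁿ`. Its logarithmic derivative is
`∑ⱼ aⱼ xⱼ / (1 + xⱼ T) = ∑ᵢ (-1)ⁱ pᵢ₊₁ Tⁱ`, so comparing coefficients in `E' = (E' / E) E` gives
Newton's identities `(n + 1) eₙ₊₁ = ∑ᵢ (-1)ⁱ pᵢ₊₁ eₙ₋ᵢ`. These express `pₙ₊₁` polynomially in
`p₁, …, pₙ, e₁, …, eₙ₊₁` and, over a `ℚ`-algebra, `eₙ₊₁` in `e₁, …, eₙ, p₁, …, pₙ₊₁`; both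
inclusions follow by induction.
-/

open Finset PowerSeries

section Rescale

variable {A : Type*} [CommSemiring A]

theorem rescale_smul (x a : A) (f : A⟦X⟧) : rescale x (a • f) = a • rescale x f := by
  ext n
  simp only [coeff_rescale, map_smul, smul_eq_mul, mul_left_comm]

theorem derivative_rescale (x : A) (f : A⟦X⟧) :
    d⁄dX A (rescale x f) = x • rescale x (d⁄dX A f) := by
  ext n
  simp only [coeff_derivative, coeff_rescale, map_smul, smul_eq_mul]
  ring

end Rescale

section BinomialSeries

variable {R A : Type*} [CommRing R] [BinomialRing R]

theorem succ_mul_choose_succ (r : R) (n : ℕ) :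
    ((n : R) + 1) * Ring.choose r (n + 1) = r * Ring.choose (r - 1) n := by
  simpa using Ring.choose_smul_choose r (Nat.le_add_left 1 n)

theorem choose_neg_one (n : ℕ) : Ring.choose (-1 : R) n = (-1) ^ n := by
  have choose_self : Ring.choose (n : R) n = 1 := by simp [Ring.choose_natCast]
  rw [Ring.choose_neg, add_sub_cancel_left, choose_self, Units.smul_def, zsmul_one,
    Int.cast_negOnePow_natCast]

variable [CommRing A] [Algebra R A]

theorem derivative_binomialSeries (r : R) :
    d⁄dX A (binomialSeries A r) = r • binomialSeries A (r - 1) := by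
  ext n
  have coeff_eq := congrArg (algebraMap R A) (succ_mul_choose_succ r n)
  simp only [map_mul, map_add, map_natCast, map_one] at coeff_eq
  rw [coeff_derivative, PowerSeries.coeff_smul, binomialSeries_coeff, binomialSeries_coeff,
    Algebra.smul_def, Algebra.smul_def, Algebra.smul_def, mul_one, mul_one, mul_comm, coeff_eq]

end BinomialSeries

theorem derivation_prod_of_forall_eq_mul {R A ι : Type*} [CommSemiring R] [CommSemiring A]
    [Algebra R A] (D : Derivation R A A) {s : Finset ι} {f g : ι → A}
    (hD : ∀ i ∈ s, D (f i) = g i * f i) :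
    D (∏ i ∈ s, f i) = (∑ i ∈ s, g i) * ∏ i ∈ s, f i := by
  classical
  induction s using Finset.induction_on with
  | empty => simp
  | insert i s hi ih =>
    rw [forall_mem_insert] at hD
    rw [prod_insert hi, sum_insert hi, D.leibniz, ih hD.2, hD.1, smul_eq_mul, smul_eq_mul]
    ring

section WeightedSymmetric

variable {A ι : Type*} [CommRing A] [Fintype ι]

/-- The power sum `∑ⱼ aⱼ xⱼⁿ` of the elements `xⱼ` with weights `aⱼ`. -/
def weightedPsum (a x : ι → A) (n : ℕ) : A :=
  ∑ j, a j * x j ^ n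

variable [BinomialRing A]

/-- The elementary symmetric polynomial of degree `n` in the elements `xⱼ` with weights `aⱼ`; for
natural weights it is the usual one with each `xⱼ` repeated `aⱼ` times. -/
def weightedEsymm [DecidableEq ι] (a x : ι → A) (n : ℕ) : A :=
  ∑ t ∈ piAntidiag univ n, ∏ j, Ring.choose (a j) (t j) * x j ^ t j

/-- The generating series `∏ⱼ (1 + xⱼ T) ^ aⱼ` of the weighted elementary symmetric polynomials. -/
noncomputable def weightedEsymmSeries (a x : ι → A) : A⟦X⟧ :=
  ∏ j, rescale (x j) (binomialSeries A (a j))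

theorem coeff_weightedEsymmSeries [DecidableEq ι] (a x : ι → A) (n : ℕ) :
    coeff n (weightedEsymmSeries a x) = weightedEsymm a x n := by
  rw [weightedEsymmSeries, coeff_prod, weightedEsymm]
  refine sum_equiv Finsupp.equivFunOnFinite (fun t => by simp) fun t _ => ?_
  simp [mul_comm]

/-- The series `∑ⱼ aⱼ xⱼ / (1 + xⱼ T)`, the logarithmic derivative of `weightedEsymmSeries a x`. -/
noncomputable def weightedPsumSeries (a x : ι → A) : A⟦X⟧ :=
  ∑ j, (a j * x j) • rescale (x j) (binomialSeries A (-1 : A))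

theorem coeff_weightedPsumSeries (a x : ι → A) (n : ℕ) :
    coeff n (weightedPsumSeries a x) = (-1) ^ n * weightedPsum a x (n + 1) := by
  simp only [weightedPsumSeries, map_sum, map_smul, coeff_rescale, binomialSeries_coeff,
    choose_neg_one, smul_eq_mul, mul_one, weightedPsum, mul_sum]
  exact sum_congr rfl fun j _ => by ring

theorem derivative_weightedEsymmSeries (a x : ι → A) :
    d⁄dX A (weightedEsymmSeries a x) = weightedPsumSeries a x * weightedEsymmSeries a x := by
  refine derivation_prod_of_forall_eq_mul _ fun j _ => ?_
  rw [derivative_rescale, derivative_binomialSeries, sub_eq_neg_add, binomialSeries_add,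
    rescale_smul, map_mul, smul_smul, mul_comm (x j), smul_mul_assoc]

end WeightedSymmetric

section Newton

variable {R A : Type*} [CommRing R] [CommRing A] [Algebra R A]

/-- The sequences `p₁, p₂, …` and `e₀, e₁, …` satisfy Newton's identities. The value `p 0` is
unconstrained. -/
structure NewtonIdentities (p e : ℕ → A) : Prop where
  zero : e 0 = 1
  succ (n : ℕ) : ((n : A) + 1) * e (n + 1) =
    ∑ ij ∈ antidiagonal n, (-1) ^ ij.1 * p (ij.1 + 1) * e ij.2

namespace NewtonIdentities

variable {p e : ℕ → A} {N : ℕ} {S : Subalgebra R A}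

theorem psum_succ (h : NewtonIdentities p e) (n : ℕ) :
    p (n + 1) = (-1) ^ n * (((n : A) + 1) * e (n + 1) -
      ∑ i ∈ range n, (-1) ^ i * p (i + 1) * e (n - i)) := by
  rw [h.succ, Nat.sum_antidiagonal_eq_sum_range_succ fun i j => (-1) ^ i * p (i + 1) * e j,
    sum_range_succ, Nat.sub_self, h.zero, add_sub_cancel_left, mul_one, ← mul_assoc, ← mul_pow]
  simp

theorem psum_mem (h : NewtonIdentities p e) (he : ∀ n ∈ Set.Icc 1 N, e n ∈ S) :
    ∀ n ∈ Set.Icc 1 N, p n ∈ S := by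
  intro n hn
  induction n using Nat.strong_induction_on with
  | _ n ih =>
  obtain ⟨n, rfl⟩ := Nat.exists_eq_add_of_le' hn.1
  have neg_one_pow_mem (i : ℕ) : (-1 : A) ^ i ∈ S := pow_mem (neg_mem S.one_mem) i
  rw [h.psum_succ]
  refine mul_mem (neg_one_pow_mem n) (sub_mem (mul_mem (add_mem (natCast_mem S n) S.one_mem)
    (he _ hn)) (sum_mem fun i hi => ?_))
  obtain ⟨-, hnN⟩ := hn
  rw [mem_range] at hi
  exact mul_mem (mul_mem (neg_one_pow_mem i) (ih _ (by lia) ⟨by lia, by lia⟩))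
    (he _ ⟨by lia, by lia⟩)

variable [Algebra ℚ R]

theorem esymm_mem (h : NewtonIdentities p e) (hp : ∀ n ∈ Set.Icc 1 N, p n ∈ S) :
    ∀ n ≤ N, e n ∈ S := by
  intro n hn
  induction n using Nat.strong_induction_on with
  | _ n ih =>
  cases n with
  | zero => exact h.zero ▸ S.one_mem
  | succ n =>
    have succ_mul_mem : ((n : A) + 1) * e (n + 1) ∈ S := by
      rw [h.succ]
      refine sum_mem fun ij hij => ?_
      rw [HasAntidiagonal.mem_antidiagonal] at hij
      exact mul_mem (mul_mem (pow_mem (neg_mem S.one_mem) _) (hp _ ⟨by lia, by lia⟩))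
        (ih _ (by lia) (by lia))
    have inv_mul_succ : algebraMap ℚ R (n + 1)⁻¹ * ((n : R) + 1) = 1 := by
      have := congrArg (algebraMap ℚ R) (inv_mul_cancel₀ (Nat.cast_add_one_ne_zero (R := ℚ) n))
      simpa only [map_mul, map_add, map_natCast, map_one] using this
    have e_eq : e (n + 1) = algebraMap ℚ R (n + 1)⁻¹ • (((n : A) + 1) * e (n + 1)) := by
      have cast_succ : (n : A) + 1 = algebraMap R A (n + 1) := by simp
      rw [cast_succ, ← Algebra.smul_def, smul_smul, inv_mul_succ, one_smul]
    rw [e_eq]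
    exact S.smul_mem succ_mul_mem _

variable (R) in
theorem adjoin_eq (h : NewtonIdentities p e) (N : ℕ) :
    Algebra.adjoin R (p '' Set.Icc 1 N) = Algebra.adjoin R (e '' Set.Icc 1 N) := by
  apply le_antisymm <;> rw [Algebra.adjoin_le_iff, Set.image_subset_iff]
  · exact h.psum_mem fun n hn => Algebra.subset_adjoin (Set.mem_image_of_mem e hn)
  · exact fun n hn =>
      h.esymm_mem (fun m hm => Algebra.subset_adjoin (Set.mem_image_of_mem p hm)) n hn.2

end NewtonIdentities

end Newton

theorem newtonIdentities_weighted {A ι : Type*} [CommRing A] [BinomialRing A] [Fintype ι]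
    [DecidableEq ι] (a x : ι → A) : NewtonIdentities (weightedPsum a x) (weightedEsymm a x) where
  zero := by simp [weightedEsymm]
  succ n := by
    have coeff_eq := congrArg (coeff n) (derivative_weightedEsymmSeries a x)
    simpa only [coeff_derivative, PowerSeries.coeff_mul, coeff_weightedEsymmSeries,
      coeff_weightedPsumSeries, mul_comm (weightedEsymm a x (n + 1))] using coeff_eq

theorem stmt_1_general (R : Type*) {A ι : Type*} [CommRing R] [Algebra ℚ R] [CommRing A]
    [BinomialRing A] [Algebra R A] [Fintype ι] [DecidableEq ι] (a x : ι → A) (N : ℕ) :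
    Algebra.adjoin R (weightedPsum a x '' Set.Icc 1 N) =
      Algebra.adjoin R (weightedEsymm a x '' Set.Icc 1 N) :=
  (newtonIdentities_weighted a x).adjoin_eq R N

theorem gbinom_eq_choose {σ : Type} (a : MvPolynomial σ ℂ) (n : ℕ) :
    gbinom a n = Ring.choose a n := by
  have aeval_eq : Polynomial.aeval a (descPochhammer ℂ n) = n.factorial • Ring.choose a n := by
    rw [← Ring.descPochhammer_eq_factorial_smul_choose, ← descPochhammer_map (algebraMap ℤ ℂ),
      Polynomial.aeval_map_algebraMap, Polynomial.aeval_eq_smeval]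
  rw [gbinom, aeval_eq, ← Nat.cast_smul_eq_nsmul ℂ, inv_smul_smul₀]
  exact_mod_cast n.factorial_ne_zero

theorem wPow_eq_weightedPsum (k : ℕ) :
    wPow k = weightedPsum (fun j => MvPolynomial.X (Sum.inl j))
      (fun j => MvPolynomial.X (Sum.inr j)) :=
  rfl

theorem wElem_eq_weightedEsymm (k : ℕ) :
    wElem k = weightedEsymm (fun j => MvPolynomial.X (Sum.inl j))
      (fun j => MvPolynomial.X (Sum.inr j)) := by
  ext1 n
  simp only [wElem, weightedEsymm, gbinom_eq_choose, piAntidiag_univ_fin_eq_antidiagonalTuple]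

/-- For every `N ≥ 1`, the `ℂ`-subalgebra of `ℂ[y₁,…,y_k,x₁,…,x_k]`
generated by `p₁,…,p_N` equals the one generated by `e₁,…,e_N`. -/
theorem stmt_1 (k N : ℕ) (hN : 1 ≤ N) :
    Algebra.adjoin ℂ (wPow k '' Set.Icc 1 N) = Algebra.adjoin ℂ (wElem k '' Set.Icc 1 N) := by
  rw [wPow_eq_weightedPsum, wElem_eq_weightedEsymm]
  exact stmt_1_general ℂ _ _ N
end

section
/- Let m̄₁,…,m̄_k be vectors in ℂ^r such that for every nonempty subset S ⊆ {1,…,k} the sum Σ_{i∈S} m̄ᵢ is not the zero vector, and let v₁,…,v_k ∈ ℂ. If for every integer ℓ ≥ 1 one has v₁^ℓ·m̄₁ + v₂^ℓ·m̄₂ + ⋯ + v_k^ℓ·m̄_k = 0 in ℂ^r, then v₁ = v₂ = ⋯ = v_k = 0. -/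
/-!
A polynomial vanishing at all the `v i` other than a given value `x` turns the power relations into
a relation supported on the fibre `{i | v i = x}`. If `x ≠ 0`, the factor `x` contributed by the
missing zeroth power can be cancelled, so the weights over that fibre sum to zero; hence no nonzero
value can occur.
-/

section PowerRelations

open Finset Polynomial

variable {ι R M : Type*} {s : Finset ι} {v : ι → R} {m : ι → M}

theorem sum_eval_smul_eq_zero_of_sum_pow_smul_eq_zero
    [CommSemiring R] [AddCommMonoid M] [Module R M] {n : ℕ}
    (h : ∀ l < n, ∑ i ∈ s, v i ^ l • m i = 0) {p : R[X]} (hp : p.natDegree < n) :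
    ∑ i ∈ s, p.eval (v i) • m i = 0 :=
  calc ∑ i ∈ s, p.eval (v i) • m i
      = ∑ l ∈ range n, p.coeff l • ∑ i ∈ s, v i ^ l • m i := by
        simp only [eval_eq_sum_range' hp, sum_smul, smul_sum, smul_smul]
        exact sum_comm
    _ = 0 := sum_eq_zero fun l hl ↦ by rw [h l (mem_range.mp hl), smul_zero]

theorem smul_sum_fiber {α : Type*} [DecidableEq α] [AddCommMonoid M] [DistribSMul R M]
    (u : ι → α) (f : α → R) (x : α) :
    f x • ∑ i ∈ s with u i = x, m i = ∑ i ∈ s with u i = x, f (u i) • m i := by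
  rw [smul_sum]
  exact sum_congr rfl fun i hi ↦ by rw [(mem_filter.mp hi).2]

variable [CommRing R] [IsDomain R] [DecidableEq R]
  [AddCommMonoid M] [Module R M] [Module.IsTorsionFree R M] {j : ι}

theorem sum_fiber_eq_zero_of_sum_pow_smul_eq_zero
    (h : ∀ l < #(s.image v), ∑ i ∈ s, v i ^ l • m i = 0) (hj : j ∈ s) :
    ∑ i ∈ s with v i = v j, m i = 0 := by
  let others := (s.image v).erase (v j)
  let p : R[X] := Lagrange.nodal others id
  have natDegree_lt : p.natDegree < #(s.image v) := by
    rw [Lagrange.natDegree_nodal]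
    exact card_erase_lt_of_mem (mem_image_of_mem v hj)
  have eval_ne_zero : p.eval (v j) ≠ 0 :=
    Lagrange.eval_nodal_not_at_node fun _ hx ↦ (ne_of_mem_erase hx).symm
  have eval_eq_zero {i : ι} (hi : i ∈ s) (hij : v i ≠ v j) : p.eval (v i) = 0 :=
    Lagrange.eval_nodal_at_node (v := id) (mem_erase.mpr ⟨hij, mem_image_of_mem v hi⟩)
  have smul_sum_eq_zero : p.eval (v j) • ∑ i ∈ s with v i = v j, m i = 0 :=
    calc p.eval (v j) • ∑ i ∈ s with v i = v j, m i
        = ∑ i ∈ s with v i = v j, p.eval (v i) • m i := smul_sum_fiber v (p.eval ·) (v j)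
      _ = ∑ i ∈ s, p.eval (v i) • m i :=
          sum_filter_of_ne fun i hi hne ↦ by
            contrapose! hne
            rw [eval_eq_zero hi hne, zero_smul]
      _ = 0 := sum_eval_smul_eq_zero_of_sum_pow_smul_eq_zero h natDegree_lt
  exact (smul_eq_zero_iff_right eval_ne_zero).mp smul_sum_eq_zero

theorem sum_fiber_eq_zero_of_sum_pow_succ_smul_eq_zero
    (h : ∀ l < #(s.image v), ∑ i ∈ s, v i ^ (l + 1) • m i = 0) (hj : j ∈ s) (hvj : v j ≠ 0) :
    ∑ i ∈ s with v i = v j, m i = 0 := by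
  have smul_sum_eq_zero : v j • ∑ i ∈ s with v i = v j, m i = 0 :=
    calc v j • ∑ i ∈ s with v i = v j, m i
        = ∑ i ∈ s with v i = v j, v i • m i := smul_sum_fiber v id (v j)
      _ = 0 := sum_fiber_eq_zero_of_sum_pow_smul_eq_zero
          (fun l hl ↦ by simpa only [smul_smul, ← pow_succ] using h l hl) hj
  exact (smul_eq_zero_iff_right hvj).mp smul_sum_eq_zero

end PowerRelations

theorem stmt_2_general {ι R M : Type*} [Fintype ι] [CommRing R] [IsDomain R]
    [AddCommMonoid M] [Module R M] [Module.IsTorsionFree R M] (m : ι → M)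
    (hm : ∀ S : Finset ι, S.Nonempty → ∑ i ∈ S, m i ≠ 0) (v : ι → R)
    (hv : ∀ l : ℕ, 1 ≤ l → l ≤ Fintype.card ι → ∑ i, v i ^ l • m i = 0) (i : ι) :
    v i = 0 := by
  classical
  by_contra hvi
  have pow_relations (l : ℕ) (hl : l < (Finset.univ.image v).card) :
      ∑ j, v j ^ (l + 1) • m j = 0 :=
    hv (l + 1) l.succ_pos (hl.trans_le Finset.card_image_le)
  exact hm {j | v j = v i} ⟨i, by simp⟩
    (sum_fiber_eq_zero_of_sum_pow_succ_smul_eq_zero pow_relations (Finset.mem_univ i) hvi)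

/-- Let `m̄₁,…,m̄_k ∈ ℂ^r` be such that no nonempty subset of them sums to
zero, and let `v₁,…,v_k ∈ ℂ`.  If `v₁^ℓ·m̄₁ + ⋯ + v_k^ℓ·m̄_k = 0` for every integer `ℓ ≥ 1`,
then all the `vᵢ` vanish. -/
theorem stmt_2 (k r : ℕ) (m : Fin k → Fin r → ℂ)
    (hm : ∀ S : Finset (Fin k), S.Nonempty → ∑ i ∈ S, m i ≠ 0)
    (v : Fin k → ℂ)
    (hv : ∀ l : ℕ, 1 ≤ l → ∑ i : Fin k, v i ^ l • m i = 0) :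
    ∀ i : Fin k, v i = 0 :=
  stmt_2_general m hm v fun l hl _ ↦ hv l hl
end

section
/- Let m̄₁,…,m̄_k be vectors in ℂ^r such that for every nonempty subset S ⊆ {1,…,k} the sum Σ_{i∈S} m̄ᵢ is not the zero vector, and let n ≥ 1. Then the polynomial ring ℂ[x_{i,j} : 1 ≤ i ≤ k, 1 ≤ j ≤ n] is a finitely generated module over the ℂ-subalgebra generated by all weighted monomial power sums Σ_{i=1}^k (m̄ᵢ)_c · x_{i,1}^{s₁}⋯x_{i,n}^{sₙ}, where c ranges over {1,…,r} and s = (s₁,…,sₙ) ranges over ℕⁿ ∖ {0}. -/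
open MvPolynomial

/-!
Write `I` for the ideal generated by the weighted monomial power sums. At a prime containing `I`,
the power sums `∑ i, m i c * x_{i,j} ^ d` vanish for every `d ≥ 1`; by independence of the
characters `d ↦ t ^ d`, the weights of the indices `i` with `x_{i,j} = t ≠ 0` sum to zero, which
the hypothesis on the weights forbids. Hence every variable lies in every such prime, that is,
every variable is nilpotent modulo `I`, and the quotient by `I` is a finite module over the ground
ring. Since `I` is generated by homogeneous elements of positive degree belonging to the
subalgebra, the graded Nakayama lemma lifts this finiteness to the polynomial ring.
-/

section GradedNakayama

variable {R B : Type*} [CommRing R] [CommRing B] [Algebra R B]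
  (𝒜 : ℕ → Submodule R B) [GradedAlgebra 𝒜]

lemma span_isHomogeneousElem_eq_top :
    Submodule.span R {b : B | SetLike.IsHomogeneousElem 𝒜 b} = ⊤ := by
  classical
  refine eq_top_iff.2 fun b _ => ?_
  rw [← DirectSum.sum_support_decompose 𝒜 b]
  exact sum_mem fun d _ => Submodule.subset_span ⟨d, SetLike.coe_mem _⟩

lemma proj_mem_span_of_isHomogeneousElem {T : Set B}
    (hT : ∀ t ∈ T, SetLike.IsHomogeneousElem 𝒜 t) {b : B} (hb : b ∈ Submodule.span R T) (d : ℕ) :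
    GradedAlgebra.proj 𝒜 d b ∈ Submodule.span R T := by
  suffices Submodule.span R T ≤ (Submodule.span R T).comap (GradedAlgebra.proj 𝒜 d) from this hb
  refine Submodule.span_le.2 fun t ht => ?_
  obtain ⟨e, hte⟩ := hT t ht
  simp only [Submodule.comap_coe, Set.mem_preimage, SetLike.mem_coe, GradedAlgebra.proj_apply]
  obtain rfl | hne := eq_or_ne e d
  · rw [DirectSum.decompose_of_mem_same 𝒜 hte]
    exact Submodule.subset_span ht
  · rw [DirectSum.decompose_of_mem_ne 𝒜 hte hne]
    exact zero_mem _

lemma proj_mem_of_mem_ideal_span {A : Subalgebra R B} {S : Set B} (hSA : S ⊆ A)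
    (hS : ∀ s ∈ S, ∃ e, 0 < e ∧ s ∈ 𝒜 e) {M : Submodule A B} {d : ℕ}
    (hM : ∀ e < d, ∀ b ∈ 𝒜 e, b ∈ M) {f : B} (hf : f ∈ Ideal.span S) :
    GradedAlgebra.proj 𝒜 d f ∈ M := by
  induction hf using Submodule.closure_induction with
  | zero => simp only [map_zero, zero_mem]
  | add f g _ _ hf hg => simpa only [map_add] using add_mem hf hg
  | smul_mem b s hs =>
    obtain ⟨e, he, hse⟩ := hS s hs
    rw [smul_eq_mul, GradedAlgebra.proj_apply, DirectSum.coe_decompose_mul_of_right_mem 𝒜 d hse]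
    split_ifs with hed
    · rw [mul_comm]
      exact M.smul_mem ⟨s, hSA hs⟩ (hM (d - e) (by lia) _ (SetLike.coe_mem _))
    · exact zero_mem M

theorem span_eq_top_of_sup_ideal_span_eq_top {A : Subalgebra R B} {S T : Set B} (hSA : S ⊆ A)
    (hS : ∀ s ∈ S, ∃ e, 0 < e ∧ s ∈ 𝒜 e) (hT : ∀ t ∈ T, SetLike.IsHomogeneousElem 𝒜 t)
    (h : Submodule.span R T ⊔ (Ideal.span S).restrictScalars R = ⊤) :
    Submodule.span A T = ⊤ := by
  have homogeneous_mem : ∀ d, ∀ b ∈ 𝒜 d, b ∈ Submodule.span A T := by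
    intro d
    induction d using Nat.strong_induction_on with
    | _ d ih =>
      intro b hb
      obtain ⟨t, ht, f, hf, rfl⟩ := Submodule.mem_sup.1 (h ▸ Submodule.mem_top (x := b))
      rw [← DirectSum.decompose_of_mem_same 𝒜 hb, ← GradedAlgebra.proj_apply, map_add]
      exact add_mem
        (Submodule.span_le_restrictScalars R A T (proj_mem_span_of_isHomogeneousElem 𝒜 hT ht d))
        (proj_mem_of_mem_ideal_span 𝒜 hSA hS ih hf)
  rw [← Submodule.restrictScalars_eq_top_iff R, ← top_le_iff, ← span_isHomogeneousElem_eq_top 𝒜,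
    Submodule.span_le]
  exact fun b ⟨d, hb⟩ => homogeneous_mem d b hb

lemma exists_finset_isHomogeneousElem_span_sup_eq_top (I : Ideal B) [Module.Finite R (B ⧸ I)] :
    ∃ T : Finset B, (∀ t ∈ T, SetLike.IsHomogeneousElem 𝒜 t) ∧
      Submodule.span R (T : Set B) ⊔ I.restrictScalars R = ⊤ := by
  classical
  let π := (Ideal.Quotient.mkₐ R I).toLinearMap
  have span_image_eq_top : Submodule.span R (π '' {b | SetLike.IsHomogeneousElem 𝒜 b}) = ⊤ := by
    rw [← Submodule.map_span, span_isHomogeneousElem_eq_top, Submodule.map_top,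
      LinearMap.range_eq_top]
    exact Ideal.Quotient.mk_surjective
  obtain ⟨T', hT', hspan⟩ := (Submodule.fg_span_iff_fg_span_finset_subset _).1
    (span_image_eq_top ▸ Module.Finite.fg_top)
  obtain ⟨T, hT, rfl⟩ := Finset.subset_set_image_iff.1 hT'
  refine ⟨T, hT, ?_⟩
  have ker_π : LinearMap.ker π = I.restrictScalars R :=
    Submodule.ext fun b => Ideal.Quotient.eq_zero_iff_mem
  rw [← ker_π, ← Submodule.comap_map_eq, Submodule.map_span, ← Finset.coe_image, ← hspan,
    span_image_eq_top, Submodule.comap_top]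

theorem finite_of_finite_quotient_ideal_span {A : Subalgebra R B} {S : Set B} (hSA : S ⊆ A)
    (hS : ∀ s ∈ S, ∃ e, 0 < e ∧ s ∈ 𝒜 e) [Module.Finite R (B ⧸ Ideal.span S)] :
    Module.Finite A B := by
  obtain ⟨T, hT, h⟩ := exists_finset_isHomogeneousElem_span_sup_eq_top 𝒜 (Ideal.span S)
  exact ⟨T, span_eq_top_of_sup_ideal_span_eq_top 𝒜 hSA hS hT h⟩

end GradedNakayama

section Nilpotent

variable {R C : Type*} [CommRing R] [CommRing C] [Algebra R C]

lemma isIntegral_of_isNilpotent {x : C} (hx : IsNilpotent x) : IsIntegral R x := by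
  obtain ⟨n, hn⟩ := hx
  exact IsIntegral.of_pow n.succ_pos (by simpa only [pow_succ, hn, zero_mul] using isIntegral_zero)

theorem finite_of_adjoin_eq_top_of_isNilpotent {s : Set C} (hs : s.Finite)
    (hadjoin : Algebra.adjoin R s = ⊤) (hnil : ∀ x ∈ s, IsNilpotent x) : Module.Finite R C := by
  have := Algebra.finite_adjoin_of_finite_of_isIntegral (R := R) hs
    fun x hx => isIntegral_of_isNilpotent (hnil x hx)
  rw [hadjoin] at this
  exact Module.Finite.equiv Subalgebra.topEquiv.toLinearEquiv

end Nilpotent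

theorem finite_mvPolynomial_quotient_of_isNilpotent_mk_X {R τ : Type*} [CommRing R] [Finite τ]
    {I : Ideal (MvPolynomial τ R)} (h : ∀ t, IsNilpotent (Ideal.Quotient.mk I (X t))) :
    Module.Finite R (MvPolynomial τ R ⧸ I) := by
  refine finite_of_adjoin_eq_top_of_isNilpotent
    (s := Ideal.Quotient.mkₐ R I '' Set.range X) ((Set.finite_range _).image _) ?_ ?_
  · rw [← AlgHom.map_adjoin, adjoin_range_X, Algebra.map_top, AlgHom.range_eq_top]
    exact Ideal.Quotient.mkₐ_surjective R I
  · rintro _ ⟨_, ⟨t, rfl⟩, rfl⟩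
    exact h t

section PowerSums

variable {ι κ : Type*} [Fintype ι]

theorem sum_filter_eq_zero_of_forall_sum_mul_pow_eq_zero {D : Type*} [CommRing D] [IsDomain D]
    [DecidableEq D] {w x : ι → D} (h : ∀ d ≠ 0, ∑ i, w i * x i ^ d = 0) {t : D} (ht : t ≠ 0) :
    ∑ i with x i = t, w i = 0 := by
  have independent := (linearIndependent_monoidHom (Multiplicative ℕ) D).comp _
    (powersHom D).injective
  -- Weighting by `x i * w i` moves the hypothesis from exponents `d ≥ 1` to all exponents.
  have combination_eq_zero : ∑ i, Finsupp.single (x i) (x i * w i) = 0 := by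
    refine linearIndependent_iff.1 independent _ (funext fun d => ?_)
    simpa [-Finsupp.single_mul, mul_comm, mul_left_comm, mul_assoc, pow_succ]
      using h (d.toAdd + 1) (Nat.succ_ne_zero _)
  have mul_sum_eq_zero : t * ∑ i with x i = t, w i = 0 :=
    calc t * ∑ i with x i = t, w i
        = ∑ i with x i = t, x i * w i := by
          rw [Finset.mul_sum]
          exact Finset.sum_congr rfl fun i hi => by rw [(Finset.mem_filter.1 hi).2]
      _ = (∑ i, Finsupp.single (x i) (x i * w i)) t := by
          simp only [Finsupp.finsetSum_apply, Finsupp.single_apply, Finset.sum_filter]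
      _ = 0 := by rw [combination_eq_zero, Finsupp.zero_apply]
  exact (mul_eq_zero.1 mul_sum_eq_zero).resolve_left ht

theorem eq_zero_of_forall_sum_mul_pow_eq_zero {D : Type*} [CommRing D] [IsDomain D]
    {w : ι → κ → D} (hw : ∀ S : Finset ι, S.Nonempty → ∑ i ∈ S, w i ≠ 0) {x : ι → D}
    (h : ∀ c, ∀ d ≠ 0, ∑ i, w i c * x i ^ d = 0) : x = 0 := by
  classical
  funext i
  by_contra hi
  refine hw {j | x j = x i} ⟨i, by simp⟩ (funext fun c => ?_)
  rw [Finset.sum_apply]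
  exact sum_filter_eq_zero_of_forall_sum_mul_pow_eq_zero (h c) hi

theorem isNilpotent_of_forall_sum_mul_pow_eq_zero {C : Type*} [CommRing C] {w : ι → κ → C}
    (hw : ∀ S : Finset ι, S.Nonempty → Ideal.span (Set.range (∑ i ∈ S, w i)) = ⊤) {x : ι → C}
    (h : ∀ c, ∀ d ≠ 0, ∑ i, w i c * x i ^ d = 0) (i : ι) : IsNilpotent (x i) := by
  refine nilpotent_iff_mem_prime.2 fun P hP => Ideal.Quotient.eq_zero_iff_mem.1 ?_
  let π := Ideal.Quotient.mk P
  refine congrFun (eq_zero_of_forall_sum_mul_pow_eq_zero (w := fun i c => π (w i c))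
    (x := fun i => π (x i)) ?_ ?_) i
  · intro S hS hsum
    refine hP.ne_top (top_le_iff.1 (hw S hS ▸ Ideal.span_le.2 ?_))
    rintro _ ⟨c, rfl⟩
    refine Ideal.Quotient.eq_zero_iff_mem.1 ?_
    simpa only [Finset.sum_apply, map_sum, Pi.zero_apply] using congrFun hsum c
  · intro c d hd
    simpa only [map_sum, map_mul, map_pow, map_zero] using congrArg π (h c d hd)

end PowerSums

section WeightedPowerSum

variable {R ι σ κ : Type*} [CommRing R] [Fintype ι] [Fintype σ]

/-- The weighted monomial power sum `∑ i, w i * x_{i,1} ^ s 1 ⋯ x_{i,n} ^ s n`, the generator of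
exponent `s` of the subalgebra attached to one coordinate `w` of the weight vectors. -/
noncomputable def weightedPowerSum (w : ι → R) (s : σ → ℕ) : MvPolynomial (ι × σ) R :=
  ∑ i, C (w i) * ∏ j, X (i, j) ^ s j

lemma weightedPowerSum_isHomogeneous (w : ι → R) (s : σ → ℕ) :
    (weightedPowerSum w s).IsHomogeneous (∑ j, s j) :=
  IsHomogeneous.sum _ _ _ fun i _ =>
    (IsHomogeneous.prod _ _ _ fun j _ => isHomogeneous_X_pow (i, j) (s j)).C_mul (w i)

lemma weightedPowerSum_single [DecidableEq σ] (w : ι → R) (j : σ) (d : ℕ) :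
    weightedPowerSum w (Pi.single j d) = ∑ i, C (w i) * X (i, j) ^ d := by
  simp [weightedPowerSum, Pi.single_apply]

variable (σ) in
/-- The weighted monomial power sums with nonzero exponent, for all the coordinates of the weight
vectors `m i : κ → R`. -/
def weightedPowerSums (m : ι → κ → R) : Set (MvPolynomial (ι × σ) R) :=
  {f | ∃ (c : κ) (s : σ → ℕ), s ≠ 0 ∧ f = weightedPowerSum (fun i => m i c) s}

lemma isNilpotent_mk_X_of_weightedPowerSums {m : ι → κ → R}
    (hm : ∀ S : Finset ι, S.Nonempty → Ideal.span (Set.range (∑ i ∈ S, m i)) = ⊤) (p : ι × σ) :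
    IsNilpotent (Ideal.Quotient.mk (Ideal.span (weightedPowerSums σ m)) (X p)) := by
  classical
  obtain ⟨i, j⟩ := p
  let π := Ideal.Quotient.mk (Ideal.span (weightedPowerSums σ m))
  refine isNilpotent_of_forall_sum_mul_pow_eq_zero (w := fun i c => π (C (m i c)))
    (x := fun i => π (X (i, j))) ?_ ?_ i
  · intro S hS
    have map_sum_eq : (π.comp C) ∘ (∑ i ∈ S, m i) = ∑ i ∈ S, fun c => π (C (m i c)) :=
      funext fun c => by simp only [Function.comp_apply, Finset.sum_apply, map_sum,
        RingHom.comp_apply]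
    rw [← map_sum_eq, Set.range_comp, ← Ideal.map_span, hm S hS, Ideal.map_top]
  · intro c d hd
    have mem : weightedPowerSum (fun i => m i c) (Pi.single j d) ∈ weightedPowerSums σ m :=
      ⟨c, _, Pi.single_ne_zero_iff.2 hd, rfl⟩
    simpa only [weightedPowerSum_single, map_sum, map_mul, map_pow]
      using Ideal.Quotient.eq_zero_iff_mem.2 (Ideal.subset_span mem)

/-- The ideal condition says that no nonempty subset of the weights sums to zero modulo any prime
ideal; over a field this is the condition of `stmt_4`. -/
theorem stmt_4_general {m : ι → κ → R}
    (hm : ∀ S : Finset ι, S.Nonempty → Ideal.span (Set.range (∑ i ∈ S, m i)) = ⊤) :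
    Module.Finite (Algebra.adjoin R (weightedPowerSums σ m)) (MvPolynomial (ι × σ) R) := by
  let _ := gradedAlgebra (σ := ι × σ) (R := R)
  have := finite_mvPolynomial_quotient_of_isNilpotent_mk_X
    (isNilpotent_mk_X_of_weightedPowerSums (σ := σ) hm)
  refine finite_of_finite_quotient_ideal_span (homogeneousSubmodule (ι × σ) R)
    Algebra.subset_adjoin ?_
  rintro _ ⟨c, s, hs, rfl⟩
  refine ⟨∑ j, s j, ?_, weightedPowerSum_isHomogeneous _ s⟩
  simpa [pos_iff_ne_zero, funext_iff] using hs

end WeightedPowerSum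

lemma span_range_eq_top_of_ne_zero {F κ : Type*} [Field F] {v : κ → F} (hv : v ≠ 0) :
    Ideal.span (Set.range v) = ⊤ := by
  obtain ⟨c, hc⟩ := Function.ne_iff.1 hv
  exact Ideal.eq_top_of_isUnit_mem _ (Ideal.subset_span ⟨c, rfl⟩) (IsUnit.mk0 _ hc)

/-- Let `m̄₁,…,m̄_k ∈ ℂ^r` with no nonempty subset summing to zero, and
`n ≥ 1`.  Then `ℂ[x_{i,j} : 1 ≤ i ≤ k, 1 ≤ j ≤ n]` is a finitely generated module over the
`ℂ`-subalgebra generated by all weighted monomial power sums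
`Σ_{i=1}^k (m̄ᵢ)_c · x_{i,1}^{s₁}⋯x_{i,n}^{sₙ}` for `c ∈ {1,…,r}` and `s ∈ ℕⁿ ∖ {0}`. -/
theorem stmt_4 (k r n : ℕ) (hn : 1 ≤ n) (m : Fin k → Fin r → ℂ)
    (hm : ∀ S : Finset (Fin k), S.Nonempty → ∑ i ∈ S, m i ≠ 0) :
    Module.Finite
      (Algebra.adjoin ℂ
        {f : MvPolynomial (Fin k × Fin n) ℂ |
          ∃ (c : Fin r) (s : Fin n → ℕ), s ≠ 0 ∧
            f = ∑ i : Fin k, C (m i c) * ∏ j : Fin n, X (i, j) ^ s j})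
      (MvPolynomial (Fin k × Fin n) ℂ) :=
  stmt_4_general fun S hS => span_range_eq_top_of_ne_zero (hm S hS)
end

section
/- Let a, b, k be positive integers and let f be a polynomial in the a·b entries of an a×b matrix, with complex coefficients. If f vanishes at every a×b matrix all of whose entries are nonnegative integers and whose rank is at most k, then f vanishes at every a×b complex matrix of rank at most k. Equivalently, the set of matrices with nonnegative integer entries and rank at most k is Zariski-dense in the variety of complex a×b matrices of rank at most k. -/
/-!
A matrix has rank at most `k` exactly when it is a product `P * Q` with inner dimension `k`, so the
rank-`≤ k` matrices are the image of an affine space under a polynomial map. This map sends pairs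
`(P, Q)` with natural-number entries to matrices with natural-number entries, and such pairs are
Zariski-dense in the affine space because `ℕ` is infinite.
-/

open MvPolynomial

theorem rank_le_card_iff_exists_eq_mul {K l m n : Type*} [Field K] [Fintype l] [Fintype n]
    {M : Matrix m n K} :
    M.rank ≤ Fintype.card l ↔ ∃ (P : Matrix m l K) (Q : Matrix l n K), M = P * Q := by
  classical
  constructor
  · intro hM
    rw [Matrix.rank, ← Module.finrank_fintype_fun_eq_card K] at hM
    obtain ⟨φ, hφ⟩ := finrank_le_iff_exists_linearMap.mp hM
    obtain ⟨ψ, hψφ⟩ := φ.exists_leftInverse_of_injective (LinearMap.ker_eq_bot.mpr hφ)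
    let toRange := M.mulVecLin.rangeRestrict
    let ofRange := M.mulVecLin.range.subtype
    refine ⟨(ofRange ∘ₗ ψ).toMatrix', (φ ∘ₗ toRange).toMatrix', ?_⟩
    calc
      M = M.mulVecLin.toMatrix' := (LinearMap.toMatrix'_toLin' M).symm
      _ = (ofRange ∘ₗ (ψ ∘ₗ φ) ∘ₗ toRange).toMatrix' := by rw [hψφ]; rfl
      _ = (ofRange ∘ₗ ψ).toMatrix' * (φ ∘ₗ toRange).toMatrix' :=
        LinearMap.toMatrix'_comp (ofRange ∘ₗ ψ) (φ ∘ₗ toRange)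
  · rintro ⟨P, Q, rfl⟩
    exact (Matrix.rank_mul_le_left P Q).trans P.rank_le_card_width

section IntegralDomain

variable {R : Type*} [CommRing R] [IsDomain R]

theorem eval_comp_eq_zero_of_forall_mem_pi {σ τ : Type*} (g : τ → MvPolynomial σ R)
    (f : MvPolynomial τ R) (s : σ → Set R) (hs : ∀ i, (s i).Infinite)
    (hvan : ∀ x ∈ Set.univ.pi s, eval (fun j => eval x (g j)) f = 0) (x : σ → R) :
    eval (fun j => eval x (g j)) f = 0 := by
  have eval_pullback (y : σ → R) : eval y (bind₁ g f) = eval (fun j => eval y (g j)) f :=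
    eval₂Hom_bind₁ _ y g f
  have pullback_eq_zero : bind₁ g f = 0 :=
    funext_set s hs fun y hy => by rw [eval_pullback, hvan y hy, map_zero]
  rw [← eval_pullback, pullback_eq_zero, map_zero]

theorem eval_mul_eq_zero_of_forall_mem {l m n : Type*} [Fintype l] {s : Set R} (hs : s.Infinite)
    (f : MvPolynomial (m × n) R)
    (hvan : ∀ (P : Matrix m l R) (Q : Matrix l n R), (∀ i t, P i t ∈ s) → (∀ t j, Q t j ∈ s) →
      eval (fun p => (P * Q) p.1 p.2) f = 0)
    (P : Matrix m l R) (Q : Matrix l n R) :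
    eval (fun p => (P * Q) p.1 p.2) f = 0 := by
  let productEntry (p : m × n) : MvPolynomial ((m × l) ⊕ (l × n)) R :=
    ∑ t, X (Sum.inl (p.1, t)) * X (Sum.inr (t, p.2))
  have eval_productEntry (x : (m × l) ⊕ (l × n) → R) (p : m × n) :
      eval x (productEntry p) =
        (Matrix.of (fun i t => x (Sum.inl (i, t))) * Matrix.of fun t j => x (Sum.inr (t, j)))
          p.1 p.2 := by
    simp only [productEntry, map_sum, map_mul, eval_X, Matrix.mul_apply, Matrix.of_apply]
  have vanishes := eval_comp_eq_zero_of_forall_mem_pi productEntry f (fun _ => s) (fun _ => hs)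
  simp only [eval_productEntry] at vanishes
  exact vanishes
    (fun x hx => hvan _ _ (fun _ _ => hx _ (Set.mem_univ _)) (fun _ _ => hx _ (Set.mem_univ _)))
    (Sum.elim (fun p => P p.1 p.2) (fun p => Q p.1 p.2))

end IntegralDomain

theorem stmt_11_general {K m n : Type*} [Field K] [Fintype n] (S : NonUnitalSubsemiring K)
    (hS : (S : Set K).Infinite) (k : ℕ) (f : MvPolynomial (m × n) K)
    (hvan : ∀ M : Matrix m n K, (∀ i j, M i j ∈ S) → M.rank ≤ k →
      eval (fun p => M p.1 p.2) f = 0)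
    (M : Matrix m n K) (hM : M.rank ≤ k) :
    eval (fun p => M p.1 p.2) f = 0 := by
  rw [← Fintype.card_fin k] at hM hvan
  obtain ⟨P, Q, rfl⟩ := rank_le_card_iff_exists_eq_mul.mp hM
  refine eval_mul_eq_zero_of_forall_mem hS f (fun P Q hP hQ => hvan (P * Q) ?_ ?_) P Q
  · intro i j
    rw [Matrix.mul_apply]
    exact sum_mem fun t _ => mul_mem (hP i t) (hQ t j)
  · exact rank_le_card_iff_exists_eq_mul.mpr ⟨P, Q, rfl⟩

/-- Let `a, b, k` be positive integers and `f` a polynomial in the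
entries of an `a×b` matrix.  If `f` vanishes at every matrix with nonnegative integer
entries of rank at most `k`, then `f` vanishes at every complex `a×b` matrix of rank at
most `k`; i.e. the nonnegative-integer matrices of rank `≤ k` are Zariski-dense in the
rank-`≤ k` matrix variety. -/
theorem stmt_11 (a b k : ℕ) (ha : 0 < a) (hb : 0 < b) (hk : 0 < k)
    (f : MvPolynomial (Fin a × Fin b) ℂ)
    (hvan : ∀ M : Matrix (Fin a) (Fin b) ℂ,
      (∀ i j, ∃ n : ℕ, M i j = n) → M.rank ≤ k →
      MvPolynomial.eval (fun p => M p.1 p.2) f = 0) :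
    ∀ M : Matrix (Fin a) (Fin b) ℂ, M.rank ≤ k →
      MvPolynomial.eval (fun p => M p.1 p.2) f = 0 := by
  exact stmt_11_general (Nat.castRingHom ℂ).rangeS.toNonUnitalSubsemiring
    (Set.infinite_range_of_injective Nat.cast_injective) k f fun M hM =>
      hvan M fun i j => (hM i j).imp fun _ => Eq.symm
end

section
/- Let m = (m₁,…,m_k) ∈ ℂ^k and let v = (v₁,…,v_k), v' = (v'₁,…,v'_k) ∈ ℂ^k. Then the following are equivalent: (i) for every integer n ≥ 1, m₁v₁ⁿ + ⋯ + m_k v_kⁿ = m₁v'₁ⁿ + ⋯ + m_k v'_kⁿ; (ii) for every c ∈ ℂ, the sum of those mᵢ with vᵢ = c equals the sum of those mᵢ with v'ᵢ = c. -/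
open scoped Classical

/-!
By Dedekind's theorem the geometric sequences `n ↦ c ^ n`, being distinct characters of the monoid
`ℕ`, are linearly independent. The sequence of power sums is a linear combination of them in which
`n ↦ c ^ n` has the total weight at `c` as its coefficient. The exponent `n = 0` comes for free:
both power sums are then the sum of all the weights.
-/

theorem linearIndependent_fun_pow (R : Type*) [CommRing R] [IsDomain R] :
    LinearIndependent R fun (c : R) (n : ℕ) => c ^ n :=
  (linearIndependent_monoidHom (Multiplicative ℕ) R).comp (powersHom R) (powersHom R).injective

theorem sum_smul_eq_sum_smul_iff_of_linearIndependent {R V α ι κ : Type*} [Semiring R]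
    [AddCommMonoid V] [Module R V] [DecidableEq α] [Fintype ι] [Fintype κ] {f : α → V}
    (hf : LinearIndependent R f) (a : ι → R) (v : ι → α) (b : κ → R) (w : κ → α) :
    ∑ i, a i • f (v i) = ∑ j, b j • f (w j) ↔
      ∀ c, ∑ i with v i = c, a i = ∑ j with w j = c, b j := by
  have coeff_ext := hf.eq_iff (a := ∑ i, Finsupp.single (v i) (a i))
    (b := ∑ j, Finsupp.single (w j) (b j))
  simpa only [map_sum, Finsupp.linearCombination_single, Finsupp.ext_iff, Finsupp.finsetSum_apply,
    Finsupp.single_apply, ← Finset.sum_filter] using coeff_ext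

theorem forall_sum_mul_pow_eq_iff {R ι κ : Type*} [CommRing R] [IsDomain R] [DecidableEq R]
    [Fintype ι] [Fintype κ] (a v : ι → R) (b w : κ → R) :
    (∀ n : ℕ, ∑ i, a i * v i ^ n = ∑ j, b j * w j ^ n) ↔
      ∀ c, ∑ i with v i = c, a i = ∑ j with w j = c, b j := by
  simpa only [funext_iff, Finset.sum_apply, Pi.smul_apply, smul_eq_mul] using
    sum_smul_eq_sum_smul_iff_of_linearIndependent (linearIndependent_fun_pow R) a v b w

theorem stmt_12_general {R ι : Type*} [CommRing R] [IsDomain R] [DecidableEq R] [Fintype ι]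
    (m v v' : ι → R) :
    (∀ n : ℕ, 1 ≤ n → ∑ i, m i * v i ^ n = ∑ i, m i * v' i ^ n) ↔
      ∀ c, ∑ i with v i = c, m i = ∑ i with v' i = c, m i := by
  rw [← forall_sum_mul_pow_eq_iff]
  refine ⟨fun h n => ?_, fun h n _ => h n⟩
  rcases n.eq_zero_or_pos with rfl | hn
  · simp only [pow_zero]
  · exact h n hn

/-- For `m, v, v' ∈ ℂ^k`, the weighted power sums
`Σ mᵢvᵢⁿ` and `Σ mᵢv'ᵢⁿ` agree for all `n ≥ 1` if and only if for every `c ∈ ℂ` the sum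
of the `mᵢ` with `vᵢ = c` equals the sum of the `mᵢ` with `v'ᵢ = c`. -/
theorem stmt_12 (k : ℕ) (m v v' : Fin k → ℂ) :
    (∀ n : ℕ, 1 ≤ n → ∑ i : Fin k, m i * v i ^ n = ∑ i : Fin k, m i * v' i ^ n) ↔
    (∀ c : ℂ, ∑ i ∈ Finset.univ.filter (fun i => v i = c), m i
        = ∑ i ∈ Finset.univ.filter (fun i => v' i = c), m i) :=
  stmt_12_general m v v'
end

section
/- Let F₁,…,F_t ∈ ℂ[z] be monic polynomials of positive degree and let n̄₁,…,n̄_t ∈ ℂ^r. Then the following are equivalent: (i) there exist polynomials G₁,…,G_t ∈ ℂ[z], not all zero, with deg Gᵢ < deg Fᵢ for each i, such that Σ_{i=1}^t Gᵢ · (∏_{j≠i} F_j) · n̄ᵢ = 0 in ℂ[z]^r; (ii) there exists α ∈ ℂ such that the family of vectors (n̄ᵢ)_{i : Fᵢ(α)=0}, indexed by those i with Fᵢ(α) = 0, is linearly dependent over ℂ. -/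
/-!
Let `α` be such that the vectors `v i` with `F i (α) = 0` are independent. Applying to the relation
`∑ (G i / F i) v i = 0` a linear functional which separates one of these vectors from the others
shows that `G i / F i` has no pole at `α`. If this holds at every `α`, then each `F i` divides
`G i`, so `G i = 0` for degree reasons. Conversely, a dependence `∑ c i • v i = 0` among the vectors
with `F i (α) = 0` gives the relation with `G i / F i = c i / (X - α)`.

The relation, cleared of denominators, is stated in `K[X] ⊗[K] V`, which is `K[X]^r` for `V = K^r`.
-/

section FractionRelation

open Polynomial
open scoped TensorProduct

variable {ι K V : Type*} [Fintype ι] [Field K] [AddCommGroup V] [Module K V] {v : ι → V}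

theorem mem_of_sum_tmul_eq_zero_of_linearIndepOn {M : Type*} [AddCommGroup M] [Module K M]
    {a : ι → M} {s : Set ι} (N : Submodule K M) (hsum : ∑ i, a i ⊗ₜ[K] v i = 0)
    (hv : LinearIndepOn K v s) (ha : ∀ i ∉ s, a i ∈ N) (i : ι) : a i ∈ N := by
  classical
  by_cases hi : i ∈ s
  swap
  · exact ha i hi
  obtain ⟨φ, hφi, hφ⟩ :=
    Submodule.exists_le_ker_of_notMem (linearIndepOn_iff_notMem_span.mp hv i hi)
  have hφsum : ∑ k, φ (v k) • a k = 0 := by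
    simpa using congrArg (TensorProduct.rid K M ∘ φ.lTensor M) hsum
  have hrest : ∀ k ∈ Finset.univ.erase i, φ (v k) • a k ∈ N := by
    intro k hk
    by_cases hks : k ∈ s
    · have hφk : φ (v k) = 0 :=
        hφ (Submodule.subset_span ⟨k, ⟨hks, Finset.ne_of_mem_erase hk⟩, rfl⟩)
      simp [hφk]
    · exact N.smul_mem _ (ha k hks)
  rw [← Finset.add_sum_erase _ _ (Finset.mem_univ i)] at hφsum
  rw [← N.smul_mem_iff hφi, eq_neg_of_add_eq_zero_left hφsum]
  exact N.neg_mem (N.sum_mem hrest)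

theorem dvd_mul_prod_compl_of_linearIndepOn [DecidableEq ι] {A : Type*} [CommRing A] [IsDomain A]
    [Algebra K A] {F G : ι → A} {s : Finset ι} {i : ι} (hF : ∀ j ∈ s, F j ≠ 0)
    (hsum : ∑ k, (G k * ∏ j ∈ Finset.univ.erase k, F j) ⊗ₜ[K] v k = 0)
    (hv : LinearIndepOn K v (s : Set ι)) (hi : i ∈ s) : F i ∣ G i * ∏ j ∈ sᶜ, F j := by
  have hdvd : ∏ j ∈ s, F j ∣ G i * ∏ j ∈ Finset.univ.erase i, F j := by
    have hmem := mem_of_sum_tmul_eq_zero_of_linearIndepOn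
      ((Ideal.span {∏ j ∈ s, F j}).restrictScalars K) hsum hv
    simp only [Submodule.restrictScalars_mem, Ideal.mem_span_singleton] at hmem
    refine hmem (fun k hk ↦ ?_) i
    refine (Finset.prod_dvd_prod_of_subset _ _ F fun j hj ↦ ?_).mul_left _
    exact Finset.mem_erase.mpr ⟨fun hjk ↦ hk (hjk ▸ hj), Finset.mem_univ j⟩
  have hprod : F i * ∏ j ∈ Finset.univ.erase i, F j =
      F i * ((∏ j ∈ s.erase i, F j) * ∏ j ∈ sᶜ, F j) := by
    rw [Finset.mul_prod_erase _ F (Finset.mem_univ i), ← mul_assoc, Finset.mul_prod_erase _ F hi,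
      Finset.prod_mul_prod_compl]
  rw [mul_left_cancel₀ (hF i hi) hprod, ← Finset.mul_prod_erase s F hi, mul_left_comm,
    mul_comm (F i)] at hdvd
  exact (mul_dvd_mul_iff_left (Finset.prod_ne_zero_iff.mpr fun j hj ↦
    hF j (Finset.mem_of_mem_erase hj))).mp hdvd

theorem dvd_of_forall_isRoot_dvd_mul {p q : K[X]} (hp : p.Splits) (hp₀ : p ≠ 0)
    (h : ∀ α, p.IsRoot α → ∃ u : K[X], ¬ u.IsRoot α ∧ p ∣ q * u) : p ∣ q := by
  classical
  obtain rfl | hq := eq_or_ne q 0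
  · exact dvd_zero p
  refine hp.dvd_of_roots_le_roots hp₀ (Multiset.le_iff_count.mpr fun α ↦ ?_)
  simp only [count_roots]
  by_cases hα : p.IsRoot α
  · obtain ⟨u, hu, hpqu⟩ := h α hα
    have hqu : q * u ≠ 0 := mul_ne_zero hq fun hu₀ ↦ hu (by simp [hu₀])
    simpa [rootMultiplicity_mul hqu, rootMultiplicity_eq_zero hu] using
      rootMultiplicity_le_rootMultiplicity_of_dvd hqu hpqu α
  · simp [rootMultiplicity_eq_zero hα]

theorem dvd_of_forall_linearIndepOn_isRoot [DecidableEq ι] {F G : ι → K[X]} (hF : ∀ i, F i ≠ 0)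
    (hsplits : ∀ i, (F i).Splits)
    (hsum : ∑ i, (G i * ∏ j ∈ Finset.univ.erase i, F j) ⊗ₜ[K] v i = 0)
    (hv : ∀ α, LinearIndepOn K v {i | (F i).IsRoot α}) (i : ι) : F i ∣ G i := by
  classical
  refine dvd_of_forall_isRoot_dvd_mul (hsplits i) (hF i) fun α hα ↦ ?_
  let s : Finset ι := {j | (F j).IsRoot α}
  refine ⟨∏ j ∈ sᶜ, F j, ?_, ?_⟩
  · simp [s, IsRoot.def, eval_prod, Finset.prod_eq_zero_iff]
  · exact dvd_mul_prod_compl_of_linearIndepOn (fun j _ ↦ hF j) hsum (by simpa [s] using hv α)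
      (by simpa [s])

theorem divByMonic_X_sub_C_mul_prod_erase {κ R : Type*} [DecidableEq κ] [CommRing R]
    {F : κ → R[X]} {α : R} {s : Finset κ} {i : κ} (hi : i ∈ s) (hroot : (F i).IsRoot α) :
    (F i /ₘ (X - C α)) * ∏ j ∈ s.erase i, F j = (∏ j ∈ s, F j) /ₘ (X - C α) := by
  have hprod : (∏ j ∈ s, F j).IsRoot α := hroot.dvd (Finset.dvd_prod_of_mem F hi)
  apply (monic_X_sub_C α).isRegular.left
  dsimp only
  rw [← mul_assoc, mul_divByMonic_eq_iff_isRoot.mpr hroot,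
    mul_divByMonic_eq_iff_isRoot.mpr hprod, Finset.mul_prod_erase s F hi]

theorem exists_sum_tmul_eq_zero_of_not_linearIndepOn [DecidableEq ι] {F : ι → K[X]}
    (hF : ∀ i, F i ≠ 0) {α : K} (hv : ¬ LinearIndepOn K v {i | (F i).IsRoot α}) :
    ∃ G : ι → K[X], (∃ i, G i ≠ 0) ∧ (∀ i, (G i).degree < (F i).degree) ∧
      ∑ i, (G i * ∏ j ∈ Finset.univ.erase i, F j) ⊗ₜ[K] v i = 0 := by
  obtain ⟨c, hroot, hc, i, hi⟩ : ∃ c : ι → K, (∀ i, c i ≠ 0 → (F i).IsRoot α) ∧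
      ∑ i, c i • v i = 0 ∧ ∃ i, c i ≠ 0 := by
    simp only [linearIndepOn_iff, not_forall] at hv
    obtain ⟨c, hmem, hc, hne⟩ := hv
    refine ⟨c, fun i hi ↦ hmem (Finsupp.mem_support_iff.mpr hi), ?_, Finsupp.ne_iff.mp hne⟩
    simpa [Finsupp.linearCombination_apply, Finsupp.sum_fintype] using hc
  refine ⟨fun k ↦ c k • (F k /ₘ (X - C α)), ⟨i, smul_ne_zero hi fun hquot ↦ hF i ?_⟩,
    fun k ↦ ?_, ?_⟩
  · simpa [hquot] using (mul_divByMonic_eq_iff_isRoot.mpr (hroot i hi)).symm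
  · exact (degree_smul_le _ _).trans_lt (degree_divByMonic_lt _ _ (hF k) (by simp))
  · have hterm (k : ι) :
        ((c k • (F k /ₘ (X - C α))) * ∏ j ∈ Finset.univ.erase k, F j) ⊗ₜ[K] v k =
          ((∏ j, F j) /ₘ (X - C α)) ⊗ₜ[K] (c k • v k) := by
      obtain hk | hk := eq_or_ne (c k) 0
      · simp [hk]
      · rw [smul_mul_assoc, divByMonic_X_sub_C_mul_prod_erase (Finset.mem_univ k) (hroot k hk),
          TensorProduct.smul_tmul]
    simp only [hterm, ← TensorProduct.tmul_sum, hc, TensorProduct.tmul_zero]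

theorem sum_tmul_pi_eq_zero_iff {R A κ : Type*} [CommSemiring R] [Semiring A] [Algebra R A]
    [Finite κ] (a : ι → A) (w : ι → κ → R) :
    ∑ i, a i ⊗ₜ[R] w i = 0 ↔ ∀ c, ∑ i, a i * algebraMap R A (w i c) = 0 := by
  classical
  have := Fintype.ofFinite κ
  rw [← (TensorProduct.piScalarRight R R A κ).map_eq_zero_iff, funext_iff]
  simp [Algebra.smul_def, Algebra.commutes]

theorem stmt_13_general [DecidableEq ι] {F : ι → K[X]} (hF : ∀ i, F i ≠ 0)
    (hsplits : ∀ i, (F i).Splits) (v : ι → V) :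
    (∃ G : ι → K[X], (∃ i, G i ≠ 0) ∧ (∀ i, (G i).degree < (F i).degree) ∧
      ∑ i, (G i * ∏ j ∈ Finset.univ.erase i, F j) ⊗ₜ[K] v i = 0) ↔
    ∃ α : K, ¬ LinearIndepOn K v {i | (F i).IsRoot α} := by
  constructor
  · rintro ⟨G, ⟨i, hi⟩, hdeg, hsum⟩
    by_contra! hv
    have hdvd : F i ∣ G i := dvd_of_forall_linearIndepOn_isRoot hF hsplits hsum hv i
    exact hi (eq_zero_of_dvd_of_degree_lt hdvd (hdeg i))
  · rintro ⟨α, hα⟩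
    exact exists_sum_tmul_eq_zero_of_not_linearIndepOn hF hα

end FractionRelation

/-- Let `F₁,…,F_t ∈ ℂ[z]` be monic of positive degree and
`n̄₁,…,n̄_t ∈ ℂ^r`.  There exist polynomials `G₁,…,G_t`, not all zero, with
`deg Gᵢ < deg Fᵢ` and `Σᵢ Gᵢ·(∏_{j≠i}F_j)·n̄ᵢ = 0` in `ℂ[z]^r` (equivalently
`Σᵢ (Gᵢ/Fᵢ)·n̄ᵢ = 0`), if and only if there is `α ∈ ℂ` such that the family of vectors
`n̄ᵢ` indexed by those `i` with `Fᵢ(α) = 0` is linearly dependent over `ℂ`. -/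
theorem stmt_13 (t r : ℕ) (F : Fin t → Polynomial ℂ)
    (hF : ∀ i, (F i).Monic ∧ 0 < (F i).degree)
    (nbar : Fin t → Fin r → ℂ) :
    (∃ G : Fin t → Polynomial ℂ,
        (∃ i, G i ≠ 0) ∧ (∀ i, (G i).degree < (F i).degree) ∧
        ∀ c : Fin r,
          ∑ i : Fin t, G i * (∏ j ∈ Finset.univ.erase i, F j) * Polynomial.C (nbar i c)
            = 0) ↔
    (∃ α : ℂ,
      ¬ LinearIndependent ℂ (fun i : {i : Fin t // (F i).eval α = 0} => nbar i)) := by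
  have h := stmt_13_general (fun i ↦ (hF i).1.ne_zero) (fun i ↦ IsAlgClosed.splits (F i)) nbar
  simpa only [sum_tmul_pi_eq_zero_iff] using! h
end
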